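/- There exists an absolute constant C > 0 such that for any irrational α, any k ≥ 1, and any real c with 1 ≤ c ≤ q_k, we have ∑_{q_k ≤ |q| < q_{k+1}} (1/q²)·min{1/‖qα‖², c²} ≤ C·c/q_k, where q_k, q_{k+1} are denominators of consecutive convergents of α. -/

import Mathlib

/-- Distance from a real number to the nearest integer. -/
noncomputable def nint (x : ℝ) : ℝ := |x - round x|

/-!
Write `p / Q` for the `k`-th convergent of `α`, so that `p / Q` is reduced and
`|α - p / Q| ≤ 1 / Q ^ 2`. If `0 < |d| ≤ Q / 2`, then `d * p / Q` is at distance at least `1 / Q`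
from `ℤ` and `d * α` differs from it by at most `1 / (2 * Q)`, whence `‖d * α‖ ≥ 1 / (2 * Q)`.
Thus the points `i * α` with `i` in an interval of length `Q / 2` are `1 / (2 * Q)`-separated on
the circle. As `min (1 / y ^ 2) (c ^ 2)` is comparable to `1 / (y ^ 2 + c⁻¹ ^ 2)`, comparing with
`∑ v ∈ ℤ, 1 / (N ^ 2 + v ^ 2) = O(1 / N)` for `N = 2 * Q / c` bounds the sum of
`min (1 / ‖i * α‖ ^ 2) (c ^ 2)` over such an interval by `O(c * Q)`. Cutting `|i| ≥ Q` into
intervals of length `Q / 2` and weighting the `b`-th of them by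
`1 / i ^ 2 = O(1 / (Q ^ 2 * (1 + b ^ 2)))` gives `O(c / Q)`.
-/

open Finset

section SumsOfCauchyKernels

theorem sum_range_one_div_sq_add_sq_le {N : ℝ} (hN : 1 ≤ N) (m : ℕ) :
    ∑ v ∈ range m, 1 / (N ^ 2 + (v : ℝ) ^ 2) ≤ 3 / N := by
  have term_le (v : ℕ) :
      1 / (N ^ 2 + (v : ℝ) ^ 2) ≤ 3 * (1 / (N + v) - 1 / (N + (v + 1 : ℕ))) := by
    have hv : (v : ℝ) ≤ (v : ℝ) ^ 2 := mod_cast Nat.le_self_pow two_ne_zero v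
    have hdiff : 1 / (N + v) - 1 / (N + (v + 1 : ℕ)) = 1 / ((N + v) * (N + v + 1)) := by
      push_cast
      field_simp
      ring
    rw [hdiff, mul_one_div, div_le_div_iff₀ (by positivity) (by positivity)]
    nlinarith [sq_nonneg (N - v)]
  calc ∑ v ∈ range m, 1 / (N ^ 2 + (v : ℝ) ^ 2)
      ≤ ∑ v ∈ range m, 3 * (1 / (N + v) - 1 / (N + (v + 1 : ℕ))) :=
        sum_le_sum fun v _ => term_le v
    _ = 3 * (1 / N - 1 / (N + m)) := by
        rw [← mul_sum, sum_range_sub' (fun v : ℕ => 1 / (N + v)), Nat.cast_zero, add_zero]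
    _ ≤ 3 * (1 / N) := by
        gcongr
        exact sub_le_self _ (by positivity)
    _ = 3 / N := mul_one_div _ _

theorem sum_int_one_div_sq_add_sq_le {N : ℝ} (hN : 1 ≤ N) (S : Finset ℤ) :
    ∑ v ∈ S, 1 / (N ^ 2 + (v : ℝ) ^ 2) ≤ 6 / N := by
  set m := S.sup Int.natAbs
  have hS : S ⊆ Icc (-(m : ℤ)) m := fun v hv => by
    have : v.natAbs ≤ m := le_sup hv
    exact mem_Icc.2 (by lia)
  have heven : Function.Even fun v : ℤ => 1 / (N ^ 2 + (v : ℝ) ^ 2) := fun v => by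
    simp only [Int.cast_neg, neg_sq]
  calc ∑ v ∈ S, 1 / (N ^ 2 + (v : ℝ) ^ 2)
      ≤ ∑ v ∈ Icc (-(m : ℤ)) m, 1 / (N ^ 2 + (v : ℝ) ^ 2) :=
        sum_le_sum_of_subset_of_nonneg hS fun _ _ _ => by positivity
    _ = 2 * ∑ v ∈ range (m + 1), 1 / (N ^ 2 + (v : ℝ) ^ 2) -
          1 / (N ^ 2 + ((0 : ℤ) : ℝ) ^ 2) := by
        rw [sum_Icc_of_even_eq_range heven, nsmul_eq_mul, Nat.cast_ofNat]
        simp only [Int.cast_natCast]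
    _ ≤ 2 * (3 / N) - 0 := by
        gcongr
        · exact sum_range_one_div_sq_add_sq_le hN _
        · positivity
    _ = 6 / N := by ring

theorem one_div_sq_add_sq_le_floor {N : ℝ} (hN : 1 ≤ N) (x : ℝ) :
    1 / (N ^ 2 + x ^ 2) ≤ 3 * (1 / (N ^ 2 + (⌊x⌋ : ℝ) ^ 2)) := by
  have hfloor : (⌊x⌋ : ℝ) ^ 2 ≤ 2 * x ^ 2 + 2 := by
    nlinarith [Int.floor_le x, Int.lt_floor_add_one x, sq_nonneg (2 * x - ⌊x⌋)]
  have hN2 : 1 ≤ N ^ 2 := one_le_pow₀ hN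
  rw [mul_one_div, div_le_div_iff₀ (by positivity) (by positivity)]
  linarith [sq_nonneg x]

theorem sum_one_div_sq_add_sq_le_of_separated {ι : Type*} {s : Finset ι} {f : ι → ℝ} {a δ : ℝ}
    (hδ : 0 < δ) (hδa : δ ≤ a) (hf : (s : Set ι).Pairwise fun i j => δ ≤ |f i - f j|) :
    ∑ i ∈ s, 1 / (a ^ 2 + f i ^ 2) ≤ 18 / (a * δ) := by
  have hN : 1 ≤ a / δ := (one_le_div hδ).2 hδa
  have hinj : Set.InjOn (fun i => ⌊f i / δ⌋) s := fun i hi j hj hij => by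
    by_contra hne
    have hlt := Int.abs_sub_lt_one_of_floor_eq_floor hij
    rw [← sub_div, abs_div, abs_of_pos hδ, div_lt_one hδ] at hlt
    exact hlt.not_ge (hf hi hj hne)
  calc ∑ i ∈ s, 1 / (a ^ 2 + f i ^ 2)
      = ∑ i ∈ s, 1 / δ ^ 2 * (1 / ((a / δ) ^ 2 + (f i / δ) ^ 2)) :=
        sum_congr rfl fun i _ => by field_simp
    _ ≤ ∑ i ∈ s, 1 / δ ^ 2 * (3 * (1 / ((a / δ) ^ 2 + (⌊f i / δ⌋ : ℝ) ^ 2))) := by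
        gcongr
        exact one_div_sq_add_sq_le_floor hN _
    _ = 3 / δ ^ 2 * ∑ v ∈ s.image fun i => ⌊f i / δ⌋, 1 / ((a / δ) ^ 2 + (v : ℝ) ^ 2) := by
        rw [sum_image hinj, mul_sum]
        exact sum_congr rfl fun i _ => by ring
    _ ≤ 3 / δ ^ 2 * (6 / (a / δ)) := by
        gcongr
        exact sum_int_one_div_sq_add_sq_le hN _
    _ = 18 / (a * δ) := by
        field_simp
        norm_num

theorem one_div_sq_le_floor_div {R y : ℝ} (hR : 0 < R) (hy : R ≤ |y|) :
    1 / y ^ 2 ≤ 6 / R ^ 2 * (1 / (1 ^ 2 + (⌊y / R⌋ : ℝ) ^ 2)) := by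
  have hRy : R ^ 2 ≤ y ^ 2 := sq_le_sq.2 ((abs_of_pos hR).trans_le hy)
  have hy0 : 0 < y ^ 2 := (pow_pos hR 2).trans_le hRy
  calc 1 / y ^ 2 ≤ 2 / (R ^ 2 + y ^ 2) := by
        rw [div_le_div_iff₀ hy0 (by positivity)]
        linarith
    _ = 2 / R ^ 2 * (1 / (1 ^ 2 + (y / R) ^ 2)) := by field_simp
    _ ≤ 2 / R ^ 2 * (3 * (1 / (1 ^ 2 + (⌊y / R⌋ : ℝ) ^ 2))) := by
        gcongr
        exact one_div_sq_add_sq_le_floor le_rfl _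
    _ = 6 / R ^ 2 * (1 / (1 ^ 2 + (⌊y / R⌋ : ℝ) ^ 2)) := by ring

theorem sum_one_div_sq_mul_le_of_forall_sum_le {ι : Type*} {s : Finset ι} {f g : ι → ℝ} {R M : ℝ}
    (hR : 0 < R) (hf : ∀ i ∈ s, R ≤ |f i|) (hg : ∀ i ∈ s, 0 ≤ g i)
    (hM : ∀ t ⊆ s, (∀ i ∈ t, ∀ j ∈ t, |f i - f j| < R) → ∑ i ∈ t, g i ≤ M) :
    ∑ i ∈ s, 1 / f i ^ 2 * g i ≤ 36 * M / R ^ 2 := by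
  set block : ι → ℤ := fun i => ⌊f i / R⌋
  have hM0 : 0 ≤ M := by simpa using hM ∅ (empty_subset s)
  have sum_block_le (b : ℤ) : ∑ i ∈ s with block i = b, g i ≤ M := by
    refine hM _ (filter_subset _ _) fun i hi j hj => ?_
    have hlt := Int.abs_sub_lt_one_of_floor_eq_floor
      ((mem_filter.1 hi).2.trans (mem_filter.1 hj).2.symm)
    rwa [← sub_div, abs_div, abs_of_pos hR, div_lt_one hR] at hlt
  calc ∑ i ∈ s, 1 / f i ^ 2 * g i
      ≤ ∑ i ∈ s, 6 / R ^ 2 * (1 / (1 ^ 2 + (block i : ℝ) ^ 2)) * g i :=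
        sum_le_sum fun i hi =>
          mul_le_mul_of_nonneg_right (one_div_sq_le_floor_div hR (hf i hi)) (hg i hi)
    _ = ∑ b ∈ s.image block, 6 / R ^ 2 * (1 / (1 ^ 2 + (b : ℝ) ^ 2)) *
          ∑ i ∈ s with block i = b, g i := by
        rw [← sum_fiberwise_of_maps_to fun i hi => mem_image_of_mem block hi]
        refine sum_congr rfl fun b _ => ?_
        rw [mul_sum]
        exact sum_congr rfl fun i hi => by rw [(mem_filter.1 hi).2]
    _ ≤ ∑ b ∈ s.image block, 6 / R ^ 2 * (1 / (1 ^ 2 + (b : ℝ) ^ 2)) * M := by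
        gcongr
        exact sum_block_le _
    _ = 6 / R ^ 2 * (∑ b ∈ s.image block, 1 / (1 ^ 2 + (b : ℝ) ^ 2)) * M := by
        rw [← sum_mul, ← mul_sum]
    _ ≤ 6 / R ^ 2 * (6 / 1) * M := by
        gcongr
        exact sum_int_one_div_sq_add_sq_le le_rfl _
    _ = 36 * M / R ^ 2 := by ring

end SumsOfCauchyKernels

section DistanceToNearestInteger

-- At `y = 0` the left side is `0` because `1 / 0 = 0`, but the right side is `2 * c ^ 2` and thus
-- also bounds the conventional value `min ∞ (c ^ 2) = c ^ 2`.
theorem min_one_div_sq_le {c : ℝ} (hc : c ≠ 0) (y : ℝ) :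
    min (1 / y ^ 2) (c ^ 2) ≤ 2 * (1 / (c⁻¹ ^ 2 + y ^ 2)) := by
  set m := min (1 / y ^ 2) (c ^ 2)
  have hmy : m * y ^ 2 ≤ 1 :=
    calc m * y ^ 2 ≤ 1 / y ^ 2 * y ^ 2 := by gcongr; exact min_le_left _ _
      _ ≤ 1 := one_div (y ^ 2) ▸ inv_mul_le_one
  have hmc : m * c⁻¹ ^ 2 ≤ 1 :=
    calc m * c⁻¹ ^ 2 ≤ c ^ 2 * c⁻¹ ^ 2 := by gcongr; exact min_le_right _ _
      _ = 1 := by field_simp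
  rw [mul_one_div, le_div_iff₀ (by positivity)]
  linarith

theorem sum_min_one_div_nint_sq_le_of_separated {ι : Type*} {s : Finset ι} {x : ι → ℝ} {c δ : ℝ}
    (hc : 0 < c) (hδ : 0 < δ) (hδc : δ ≤ c⁻¹)
    (hx : (s : Set ι).Pairwise fun i j => δ ≤ nint (x i - x j)) :
    ∑ i ∈ s, min (1 / nint (x i) ^ 2) (c ^ 2) ≤ 36 * c / δ := by
  have hsep : (s : Set ι).Pairwise fun i j =>
      δ ≤ |(x i - round (x i)) - (x j - round (x j))| := fun i hi j hj hij =>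
    calc δ ≤ nint (x i - x j) := hx hi hj hij
      _ ≤ |x i - x j - (round (x i) - round (x j) : ℤ)| := round_le _ _
      _ = |(x i - round (x i)) - (x j - round (x j))| := by
        push_cast
        ring_nf
  calc ∑ i ∈ s, min (1 / nint (x i) ^ 2) (c ^ 2)
      ≤ ∑ i ∈ s, 2 * (1 / (c⁻¹ ^ 2 + (x i - round (x i)) ^ 2)) := by
        gcongr with i
        rw [nint, sq_abs]
        exact min_one_div_sq_le hc.ne' _
    _ ≤ 2 * (18 / (c⁻¹ * δ)) := by
        rw [← mul_sum]
        gcongr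
        exact sum_one_div_sq_add_sq_le_of_separated hδ hδc hsep
    _ = 36 * c / δ := by
        field_simp
        norm_num

theorem one_div_two_mul_le_nint_mul {α : ℝ} {p : ℤ} {Q : ℕ} (hpQ : IsCoprime p (Q : ℤ))
    (hα : |α - p / Q| ≤ 1 / (Q : ℝ) ^ 2) {d : ℤ} (hd : d ≠ 0) (hdQ : 2 * |d| ≤ Q) :
    1 / (2 * (Q : ℝ)) ≤ nint (d * α) := by
  have hd_pos : 0 < |d| := abs_pos.2 hd
  have hQ : (0 : ℝ) < Q := by
    have : 0 < Q := by lia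
    exact_mod_cast this
  set n := round (d * α)
  have hne : d * p - n * Q ≠ 0 := fun h => by
    have hdvd : (Q : ℤ) ∣ d := hpQ.symm.dvd_of_dvd_mul_right ⟨n, by linarith⟩
    have hle : (Q : ℤ) ≤ |d| := Int.le_of_dvd hd_pos ((dvd_abs _ _).2 hdvd)
    lia
  have hfar : 1 / (Q : ℝ) ≤ |(d : ℝ) * (p / Q) - n| := by
    have hone : (1 : ℝ) ≤ |(d : ℝ) * p - n * Q| := mod_cast Int.one_le_abs hne
    have heq : (d : ℝ) * (p / Q) - n = (d * p - n * Q) / Q := by field_simp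
    rw [heq, abs_div, abs_of_pos hQ]
    gcongr
  have hclose : |d * (α - p / Q)| ≤ 1 / (2 * (Q : ℝ)) := by
    have hdQ' : |(d : ℝ)| ≤ Q / 2 := by
      have : 2 * |(d : ℝ)| ≤ Q := mod_cast hdQ
      linarith
    calc |d * (α - p / Q)| = |(d : ℝ)| * |α - p / Q| := abs_mul _ _
      _ ≤ Q / 2 * (1 / (Q : ℝ) ^ 2) := by gcongr
      _ = 1 / (2 * (Q : ℝ)) := by field_simp
  have htriangle : |(d : ℝ) * (p / Q) - n| ≤ nint (d * α) + |d * (α - p / Q)| :=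
    calc |(d : ℝ) * (p / Q) - n| = |(d * α - n) - d * (α - p / Q)| := by ring_nf
      _ ≤ nint (d * α) + |d * (α - p / Q)| := abs_sub _ _
  have hhalves : 1 / (Q : ℝ) = 1 / (2 * (Q : ℝ)) + 1 / (2 * (Q : ℝ)) := by
    field_simp
    norm_num
  linarith

theorem sum_min_one_div_nint_mul_sq_le {α : ℝ} {p : ℤ} {Q : ℕ} (hpQ : IsCoprime p (Q : ℤ))
    (hα : |α - p / Q| ≤ 1 / (Q : ℝ) ^ 2) {c : ℝ} (hc : 0 < c) (hcQ : c ≤ Q) {B : Finset ℤ}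
    (hB : ∀ i ∈ B, ∀ j ∈ B, 2 * |i - j| ≤ Q) :
    ∑ i ∈ B, min (1 / nint ((i : ℝ) * α) ^ 2) (c ^ 2) ≤ 72 * c * Q := by
  have hQ : (0 : ℝ) < Q := hc.trans_le hcQ
  have hδc : 1 / (2 * (Q : ℝ)) ≤ c⁻¹ := by
    rw [inv_eq_one_div]
    gcongr
    linarith
  have hsep : (B : Set ℤ).Pairwise fun i j => 1 / (2 * (Q : ℝ)) ≤ nint (i * α - j * α) := by
    intro i hi j hj hij
    rw [← sub_mul, ← Int.cast_sub]
    exact one_div_two_mul_le_nint_mul hpQ hα (sub_ne_zero.2 hij) (hB i hi j hj)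
  calc ∑ i ∈ B, min (1 / nint ((i : ℝ) * α) ^ 2) (c ^ 2)
      ≤ 36 * c / (1 / (2 * (Q : ℝ))) :=
        sum_min_one_div_nint_sq_le_of_separated hc (by positivity) hδc hsep
    _ = 72 * c * Q := by
        field_simp
        norm_num

end DistanceToNearestInteger

section Convergents

theorem contsAux_mem_subring {K : Type*} [DivisionRing K] (R : Subring K) {g : GenContFract K}
    (hh : g.h ∈ R) (hs : ∀ n gp, g.s.get? n = some gp → gp.a ∈ R ∧ gp.b ∈ R) (n : ℕ) :
    (g.contsAux n).a ∈ R ∧ (g.contsAux n).b ∈ R := by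
  induction n using Nat.twoStepInduction with
  | zero => exact ⟨R.one_mem, R.zero_mem⟩
  | one => exact ⟨hh, R.one_mem⟩
  | more n ih ih' =>
    rcases hn : g.s.get? n with _ | gp
    · rwa [GenContFract.contsAux_stable_step_of_terminated hn]
    · obtain ⟨ha, hb⟩ := hs n gp hn
      rw [GenContFract.contsAux_recurrence hn rfl rfl]
      exact ⟨R.add_mem (R.mul_mem hb ih'.1) (R.mul_mem ha ih.1),
        R.add_mem (R.mul_mem hb ih'.2) (R.mul_mem ha ih.2)⟩

variable {K : Type*} [Field K] [LinearOrder K] [FloorRing K]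

theorem exists_int_eq_nums_dens_of (v : K) (n : ℕ) :
    ∃ p q : ℤ, (GenContFract.of v).nums n = p ∧ (GenContFract.of v).dens n = q := by
  obtain ⟨⟨p, hp⟩, q, hq⟩ := contsAux_mem_subring (Int.castRingHom K).range
    (g := GenContFract.of v) ⟨⌊v⌋, GenContFract.of_h_eq_floor.symm⟩ (fun n gp hn => by
      obtain ⟨ha, z, hz⟩ := GenContFract.of_partNum_eq_one_and_exists_int_partDen_eq hn
      exact ⟨⟨1, by simp [ha]⟩, z, hz.symm⟩) (n + 1)
  exact ⟨p, q, hp.symm, hq.symm⟩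

theorem isCoprime_of_nums_eq_of_dens_eq {v : K} {n : ℕ}
    (hn : ¬(GenContFract.of v).TerminatedAt n) {p q : ℤ}
    (hp : (GenContFract.of v).nums n = p) (hq : (GenContFract.of v).dens n = q) :
    IsCoprime p q := by
  obtain ⟨p', q', hp', hq'⟩ := exists_int_eq_nums_dens_of v (n + 1)
  have hdet : (p : K) * q' - q * p' = (-1) ^ (n + 1) := by
    rw [← hp, ← hq, ← hp', ← hq']
    exact SimpContFract.determinant (s := SimpContFract.of v) hn
  have hdet_int : p * q' - q * p' = (-1) ^ (n + 1) := mod_cast hdet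
  have hsq : ((-1 : ℤ) ^ (n + 1)) * (-1) ^ (n + 1) = 1 := by rw [← mul_pow]; simp
  exact ⟨(-1) ^ (n + 1) * q', -((-1) ^ (n + 1) * p'), by
    linear_combination (-1 : ℤ) ^ (n + 1) * hdet_int + hsq⟩

variable [IsStrictOrderedRing K]

theorem one_le_dens_of (v : K) (n : ℕ) : 1 ≤ (GenContFract.of v).dens n :=
  GenContFract.zeroth_den_eq_one (g := GenContFract.of v) ▸
    monotone_nat_of_le_succ (fun m => GenContFract.of_den_mono (v := v) (n := m)) n.zero_le

theorem abs_sub_convs_le_one_div_dens_sq {v : K} {n : ℕ}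
    (hn : ¬(GenContFract.of v).TerminatedAt n) :
    |v - (GenContFract.of v).convs n| ≤ 1 / (GenContFract.of v).dens n ^ 2 := by
  have hpos : 0 < (GenContFract.of v).dens n := zero_lt_one.trans_le (one_le_dens_of v n)
  refine (GenContFract.abs_sub_convs_le hn).trans ?_
  rw [sq]
  gcongr
  exact GenContFract.of_den_mono

theorem exists_isCoprime_abs_sub_div_le {v : K} {n : ℕ} (hn : ¬(GenContFract.of v).TerminatedAt n)
    {q : ℕ} (hq : (q : K) = (GenContFract.of v).dens n) :
    ∃ p : ℤ, IsCoprime p (q : ℤ) ∧ |v - p / q| ≤ 1 / (q : K) ^ 2 := by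
  obtain ⟨p, -, hp, -⟩ := exists_int_eq_nums_dens_of v n
  refine ⟨p, isCoprime_of_nums_eq_of_dens_eq hn hp (by rw [← hq, Int.cast_natCast]), ?_⟩
  rw [← hp, hq, ← GenContFract.conv_eq_num_div_den]
  exact abs_sub_convs_le_one_div_dens_sq hn

theorem not_terminatedAt_of_irrational {α : ℝ} (hα : Irrational α) (n : ℕ) :
    ¬(GenContFract.of α).TerminatedAt n := fun h =>
  let ⟨r, hr⟩ := (GenContFract.terminates_iff_rat α).1 ⟨n, h⟩
  hα ⟨r, hr.symm⟩

end Convergents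

theorem sum_slice_min_upper_bound_general {α : ℝ} {p : ℤ} {Q : ℕ} (hpQ : IsCoprime p (Q : ℤ))
    (hα : |α - p / Q| ≤ 1 / (Q : ℝ) ^ 2) {c : ℝ} (hc : 0 < c) (hcQ : c ≤ Q) {S : Finset ℤ}
    (hS : ∀ i ∈ S, (Q : ℤ) ≤ |i|) :
    ∑ i ∈ S, (1 / (i : ℝ) ^ 2) * min (1 / nint ((i : ℝ) * α) ^ 2) (c ^ 2) ≤ 10368 * c / Q := by
  have hQ : (0 : ℝ) < Q := hc.trans_le hcQ
  have hlarge : ∀ i ∈ S, (Q / 2 : ℝ) ≤ |(i : ℝ)| := fun i hi => by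
    have : (Q : ℝ) ≤ |(i : ℝ)| := mod_cast hS i hi
    linarith
  calc ∑ i ∈ S, (1 / (i : ℝ) ^ 2) * min (1 / nint ((i : ℝ) * α) ^ 2) (c ^ 2)
      ≤ 36 * (72 * c * Q) / (Q / 2 : ℝ) ^ 2 := by
        refine sum_one_div_sq_mul_le_of_forall_sum_le (by positivity) hlarge
          (fun i _ => le_min (by positivity) (by positivity)) fun B _ hB => ?_
        refine sum_min_one_div_nint_mul_sq_le hpQ hα hc hcQ fun i hi j hj => ?_
        have : 2 * |(i : ℝ) - j| ≤ Q := by linarith [hB i hi j hj]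
        exact_mod_cast this
    _ = 10368 * c / Q := by
        field_simp
        norm_num

/-- there is an absolute constant `C > 0` such that for every irrational `α`
with convergent denominators `q`, every `k ≥ 1` and every real `1 ≤ c ≤ q_k`,
`∑_{q_k ≤ |q| < q_{k+1}} (1/q²)·min(1/‖qα‖², c²) ≤ C·c/q_k`. -/
theorem sum_slice_min_upper_bound :
    ∃ C : ℝ, 0 < C ∧ ∀ (α : ℝ), Irrational α →
      ∀ (q : ℕ → ℕ), (∀ n, (q n : ℝ) = (GenContFract.of α).dens n) →
      ∀ k : ℕ, 1 ≤ k → ∀ c : ℝ, 1 ≤ c → c ≤ (q k : ℝ) →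
      ∑ i ∈ (Finset.Ioo (-(q (k+1) : ℤ)) (q (k+1) : ℤ)).filter (fun i => (q k : ℤ) ≤ |i|),
          (1 / (i : ℝ) ^ 2) * min (1 / nint ((i : ℝ) * α) ^ 2) (c ^ 2)
        ≤ C * c / (q k : ℝ) := by
  refine ⟨10368, by norm_num, fun α hα q hq k _ c hc hcq => ?_⟩
  obtain ⟨p, hpq, happrox⟩ :=
    exists_isCoprime_abs_sub_div_le (not_terminatedAt_of_irrational hα k) (hq k)
  exact sum_slice_min_upper_bound_general hpq happrox (zero_lt_one.trans_le hc) hcq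
    fun i hi => (mem_filter.1 hi).2
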